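/- arXiv:2605.20974 — 8 statements merged into one kernel-verified Lean document; each statement's English description precedes it below -/
import Mathlib

section
/- Let M be a cancellative commutative monoid. Then every submonoid of M is an FFM if and only if every undermonoid of M is an FFM. (Main theorem: finite factorization is detected by undermonoids.) -/
/-- The set of factorizations of `b` in the submonoid `S`: multisets of irreducible
elements of `Associates ↥S` whose product is the class of `b`. -/
def ZSet {M : Type*} [CancelCommMonoid M] (S : Submonoid M) (b : S) :
    Set (Multiset (Associates S)) :=
  {z | (∀ a ∈ z, Irreducible a) ∧ z.prod = Associates.mk b}

/-- A submonoid `S` is a finite factorization monoid (FFM) if every element has a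
nonempty finite set of factorizations. -/
def IsFFM {M : Type*} [CancelCommMonoid M] (S : Submonoid M) : Prop :=
  ∀ b : S, (ZSet S b).Nonempty ∧ (ZSet S b).Finite

/-- A submonoid `N` of `M` is an undermonoid if it generates the same Grothendieck
group as `M`: every `m ∈ M` satisfies `m * x = y` for some `x, y ∈ N`. -/
def IsUndermonoid {M : Type*} [CancelCommMonoid M] (N : Submonoid M) : Prop :=
  ∀ m : M, ∃ x ∈ N, ∃ y ∈ N, m * x = y

theorem aux_irred {A B : Type*} [CommMonoid A] [CommMonoid B]
    (f : A →* B) (hf : Function.Injective f)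
    (hA : ∀ a : A, IsUnit a → a = 1) (hB : ∀ a : B, IsUnit a → a = 1) (β : A)
    (hd : ∀ x y : B, x * y = f β → ∃ x', f x' = x) (a : A) (ha : a ∣ β) :
    Irreducible a ↔ Irreducible (f a) := by
  have key : ∀ x : A, IsUnit x ↔ IsUnit (f x) := by
    intro x
    refine ⟨fun h => h.map f, fun h => ?_⟩
    have h1 := hB _ h
    have : x = 1 := hf (by rw [h1, map_one])
    rw [this]; exact isUnit_one
  obtain ⟨c, rfl⟩ := ha
  constructor
  · intro h
    refine ⟨fun hu => h.not_isUnit ((key _).2 hu), ?_⟩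
    intro x y hxy
    obtain ⟨x', rfl⟩ := hd x (y * f c) (by rw [map_mul, hxy, mul_assoc])
    obtain ⟨y', rfl⟩ := hd y (f x' * f c) (by rw [map_mul, hxy, mul_left_comm, mul_assoc])
    rw [← key, ← key]
    exact h.isUnit_or_isUnit (hf (by rw [hxy, map_mul]))
  · intro h
    refine ⟨fun hu => h.not_isUnit ((key _).1 hu), ?_⟩
    intro x y hxy
    rw [key, key]
    exact h.isUnit_or_isUnit (by rw [hxy, map_mul])

theorem aux_transfer {A B : Type*} [CommMonoid A] [CommMonoid B]
    (f : A →* B) (hf : Function.Injective f)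
    (hA : ∀ a : A, IsUnit a → a = 1) (hB : ∀ a : B, IsUnit a → a = 1) (β : A)
    (hd : ∀ x y : B, x * y = f β → ∃ x', f x' = x)
    (h1 : {z : Multiset B | (∀ a ∈ z, Irreducible a) ∧ z.prod = f β}.Nonempty)
    (h2 : {z : Multiset B | (∀ a ∈ z, Irreducible a) ∧ z.prod = f β}.Finite) :
    {z : Multiset A | (∀ a ∈ z, Irreducible a) ∧ z.prod = β}.Nonempty ∧
    {z : Multiset A | (∀ a ∈ z, Irreducible a) ∧ z.prod = β}.Finite := by
  constructor
  · obtain ⟨z, hz, hp⟩ := h1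
    have hr : ∀ a ∈ z, ∃ a', f a' = a := by
      intro a ha
      obtain ⟨d, hdd⟩ := Multiset.dvd_prod ha
      exact hd a d (by rw [← hdd, hp])
    have : ∃ z' : Multiset A, z'.map f = z := by
      clear hp hz
      induction z using Multiset.induction_on with
      | empty => exact ⟨0, rfl⟩
      | cons a s ih =>
        obtain ⟨z', rfl⟩ := ih (fun a ha => hr a (Multiset.mem_cons_of_mem ha))
        obtain ⟨a', rfl⟩ := hr a (Multiset.mem_cons_self _ _)
        exact ⟨a' ::ₘ z', by simp⟩
    obtain ⟨z', rfl⟩ := this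
    have hp' : z'.prod = β := hf (by rw [← hp, map_multiset_prod])
    refine ⟨z', fun a ha => ?_, hp'⟩
    exact (aux_irred f hf hA hB β hd a (hp' ▸ Multiset.dvd_prod ha)).2
      (hz _ (Multiset.mem_map_of_mem f ha))
  · refine Set.Finite.of_finite_image (f := Multiset.map f) (h2.subset ?_)
      ((Multiset.map_injective hf).injOn)
    rintro _ ⟨z, ⟨hz, hp⟩, rfl⟩
    refine ⟨fun b hb => ?_, by rw [← map_multiset_prod, hp]⟩
    obtain ⟨a, ha, rfl⟩ := Multiset.mem_map.1 hb
    exact (aux_irred f hf hA hB β hd a (hp ▸ Multiset.dvd_prod ha)).1 (hz a ha)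

theorem aux_unit {M : Type*} [CancelCommMonoid M] (S : Submonoid M) (b : S) (hb : IsUnit b) :
    (ZSet S b).Nonempty ∧ (ZSet S b).Finite := by
  have h1 : Associates.mk b = 1 := Associates.mk_eq_one.2 hb
  have : ZSet S b = {0} := by
    ext z
    simp only [ZSet, Set.mem_ofPred_eq, Set.mem_singleton_iff, h1]
    constructor
    · rintro ⟨hz, hp⟩
      refine Multiset.eq_zero_of_forall_notMem fun a ha => (hz a ha).not_isUnit ?_
      exact isUnit_of_dvd_one (hp ▸ Multiset.dvd_prod ha)
    · rintro rfl; simp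
  rw [this]; simp

/-- The map on associates induced by an inclusion. -/
noncomputable def auxMap {M : Type*} [CancelCommMonoid M] {S N : Submonoid M} (h : S ≤ N) :
    Associates S →* Associates N where
  toFun := Quotient.map (Submonoid.inclusion h) (fun _ _ hab => hab.map (Submonoid.inclusion h))
  map_one' := rfl
  map_mul' := by
    rintro ⟨a⟩ ⟨b⟩
    rfl

theorem aux_sub {M : Type*} [CancelCommMonoid M] {S N : Submonoid M} (h : S ≤ N) (b : S)
    (hd : ∀ x ∈ N, ∀ y ∈ N, x * y = b → x ∈ S)
    (hN : (ZSet N (Submonoid.inclusion h b)).Nonempty ∧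
      (ZSet N (Submonoid.inclusion h b)).Finite) :
    (ZSet S b).Nonempty ∧ (ZSet S b).Finite := by
  have hU : ∀ x ∈ N, ∀ y ∈ N, x * y = 1 → x ∈ S := by
    intro x hx y hy hxy
    refine hd x hx (y * b) (N.mul_mem hy (h b.2)) ?_
    rw [← mul_assoc, hxy, one_mul]
  have hmk : ∀ x : S, auxMap h (Associates.mk x) = Associates.mk (Submonoid.inclusion h x) :=
    fun _ => rfl
  refine aux_transfer (auxMap h) ?_ (fun a => Associates.isUnit_iff_eq_one a |>.1)
    (fun a => Associates.isUnit_iff_eq_one a |>.1) (Associates.mk b) ?_ hN.1 hN.2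
  · intro x y
    obtain ⟨x, rfl⟩ := Associates.mk_surjective x
    obtain ⟨y, rfl⟩ := Associates.mk_surjective y
    rw [hmk, hmk, Associates.mk_eq_mk_iff_associated, Associates.mk_eq_mk_iff_associated]
    rintro ⟨u, hu⟩
    have e1 : ((u : N) : M) * ((u⁻¹ : Nˣ) : N) = 1 := by
      rw [← Submonoid.coe_mul, Units.mul_inv]; rfl
    have e2 : (((u⁻¹ : Nˣ) : N) : M) * (u : N) = 1 := by rw [mul_comm, e1]
    refine ⟨⟨⟨_, hU _ (u : N).2 _ ((u⁻¹ : Nˣ) : N).2 e1⟩,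
      ⟨_, hU _ ((u⁻¹ : Nˣ) : N).2 _ (u : N).2 e2⟩, Subtype.ext e1, Subtype.ext e2⟩, ?_⟩
    have hu' : (x : M) * ((u : N) : M) = y := congrArg Subtype.val hu
    exact Subtype.ext hu'
  · intro x y
    obtain ⟨x, rfl⟩ := Associates.mk_surjective x
    obtain ⟨y, rfl⟩ := Associates.mk_surjective y
    rw [hmk, Associates.mk_mul_mk, Associates.mk_eq_mk_iff_associated]
    rintro ⟨u, hu⟩
    refine ⟨Associates.mk ⟨x, hd x x.2 (y * (u : N) : N) (y * (u : N) : N).2 ?_⟩, rfl⟩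
    rw [mul_assoc] at hu
    exact congrArg Subtype.val hu

theorem aux_max {M : Type*} [CancelCommMonoid M] (S : Submonoid M) (b : S) (hb : ¬ IsUnit b) :
    ∃ N : Submonoid M, S ≤ N ∧ (∀ x ∈ N, ∀ y ∈ N, x * y = b → x ∈ S) ∧ IsUndermonoid N := by
  obtain ⟨N, hSN, hmax⟩ := zorn_le_nonempty₀
    {N : Submonoid M | S ≤ N ∧ ∀ x ∈ N, ∀ y ∈ N, x * y = b → x ∈ S} (by
      intro c hc hch N0 hN0
      have hdir : DirectedOn (· ≤ ·) c := hch.directedOn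
      refine ⟨sSup c, ⟨(hc hN0).1.trans (le_sSup hN0), ?_⟩, fun z hz => le_sSup hz⟩
      intro x hx y hy hxy
      rw [Submonoid.mem_sSup_of_directedOn ⟨N0, hN0⟩ hdir] at hx hy
      obtain ⟨A, hA, hx⟩ := hx
      obtain ⟨B, hB, hy⟩ := hy
      obtain ⟨C, hC, hAC, hBC⟩ := hdir A hA B hB
      exact (hc hC).2 x (hAC hx) y (hBC hy) hxy) S ⟨le_rfl, fun x hx _ _ _ => hx⟩
  have hd := hmax.prop.2
  have hbN : (b : M) ∈ N := hSN b.2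
  refine ⟨N, hSN, hd, ?_⟩
  have step : ∀ m : M, (∀ s ∈ N, ∀ k : ℕ, s * m ^ (k + 1) ≠ b) → m ∈ N := by
    intro m hm
    have hle : N ⊔ Submonoid.powers m ≤ N := by
      refine hmax.le_of_ge ⟨hSN.trans le_sup_left, ?_⟩ le_sup_left
      intro x hx y hy hxy
      obtain ⟨s, hs, _, ⟨i, rfl⟩, rfl⟩ := Submonoid.mem_sup.1 hx
      obtain ⟨t, ht, _, ⟨j, rfl⟩, rfl⟩ := Submonoid.mem_sup.1 hy
      dsimp only at hxy ⊢
      have e : (s * t) * m ^ (i + j) = b := by rw [← hxy, pow_add, mul_mul_mul_comm]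
      rcases Nat.eq_zero_or_pos (i + j) with h0 | h0
      · obtain ⟨rfl, rfl⟩ : i = 0 ∧ j = 0 := by omega
        simp only [pow_zero, mul_one] at hxy ⊢
        exact hd s hs t ht hxy
      · obtain ⟨k, hk⟩ := Nat.exists_eq_add_of_lt h0
        rw [hk, zero_add] at e
        exact absurd e (hm _ (N.mul_mem hs ht) k)
    exact hle (Submonoid.mem_sup_right (Submonoid.mem_powers m))
  intro m
  by_cases hm : ∃ s ∈ N, ∃ k : ℕ, s * m ^ (k + 1) = b
  · obtain ⟨s, hs, k, hk⟩ := hm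
    refine ⟨s * b, N.mul_mem hs hbN, m * (s * b), step _ ?_, rfl⟩
    intro u hu j hj
    have e1 : (m * (s * b)) ^ (k + 1) = b * (s ^ k * (b : M) ^ (k + 1)) := by
      rw [mul_pow, mul_pow, pow_succ s k, ← hk]
      simp only [mul_comm, mul_left_comm, mul_assoc]
    have e2 : (u * (m * (s * b)) ^ (j + 1)) ^ (k + 1) = (b : M) ^ (k + 1) := by rw [hj]
    set c : M := s ^ k * (b : M) ^ (k + 1) with hc
    rw [mul_pow, ← pow_mul, mul_comm (j + 1), pow_mul, e1, pow_succ _ j] at e2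
    set w : M := u ^ (k + 1) * (b * c) ^ j * s ^ k with hw
    have e3 : (w * b) * (b : M) ^ (k + 1) = (b : M) ^ (k + 1) := by
      refine Eq.trans ?_ e2
      simp only [hw, hc, mul_comm, mul_left_comm, mul_assoc]
    have e4 : w * b = 1 := mul_eq_right.1 e3
    have hcN : c ∈ N := N.mul_mem (N.pow_mem hs _) (N.pow_mem hbN _)
    have hwN : w ∈ N := N.mul_mem (N.mul_mem (N.pow_mem hu _)
      (N.pow_mem (N.mul_mem hbN hcN) _)) (N.pow_mem hs _)
    have hwS : w ∈ S := hd w hwN (b * b) (N.mul_mem hbN hbN) (by rw [← mul_assoc, e4, one_mul])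
    exact hb (IsUnit.of_mul_eq_one ⟨w, hwS⟩ (Subtype.ext ((mul_comm _ _).trans e4)))
  · push Not at hm
    exact ⟨1, N.one_mem, m, step m hm, mul_one m⟩

/-- Main theorem: finite factorization is detected by undermonoids.  Every submonoid
of `M` is an FFM if and only if every undermonoid of `M` is an FFM. -/
theorem ffm_detected_by_undermonoids (M : Type*) [CancelCommMonoid M] :
    (∀ S : Submonoid M, IsFFM S) ↔ (∀ N : Submonoid M, IsUndermonoid N → IsFFM N) := by
  refine ⟨fun h N _ => h N, fun h S b => ?_⟩
  by_cases hb : IsUnit b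
  · exact aux_unit S b hb
  · obtain ⟨N, hSN, hd, hN⟩ := aux_max S b hb
    exact aux_sub hSN b hd (h N hN _)
end

section
/- Let N ≤ S be submonoids of a cancellative commutative monoid M, let b ∈ N, ℓ ∈ ℕ, and Ω ⊆ Z_{N,ℓ}(b). If S is Ω-admissible over N, then the map sending a multiset z to z.map ρ, where ρ : Associates ↥N → Associates ↥S is induced by the inclusion, restricts to an injection of Ω into Z_{S,ℓ}(b). In particular, if Ω is infinite, then S is not an FFM. -/
/-- The induced monoid homomorphism `Associates α →* Associates β`. -/
def associatesMap {α β : Type*} [CommMonoid α] [CommMonoid β] (f : α →* β) :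
    Associates α →* Associates β where
  toFun := Quotient.lift (fun a => Associates.mk (f a)) fun _ _ h =>
    Associates.mk_eq_mk_iff_associated.2 (h.map f)
  map_one' := by
    show Associates.mk (f 1) = 1
    simp
  map_mul' := by
    rintro ⟨x⟩ ⟨y⟩
    show Associates.mk (f (x * y)) = Associates.mk (f x) * Associates.mk (f y)
    simp [Associates.mk_mul_mk]

/-- The set of length-`ℓ` factorizations of `b` in `S`. -/
def ZSetLen {M : Type*} [CancelCommMonoid M] (S : Submonoid M) (b : S) (ℓ : ℕ) :
    Set (Multiset (Associates S)) :=
  {z ∈ ZSet S b | Multiset.card z = ℓ}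

/-- `u` is a unit of the submonoid `S`. -/
def IsUnitIn {M : Type*} [CancelCommMonoid M] (S : Submonoid M) (u : M) : Prop :=
  ∃ v ∈ S, u * v = 1

/-- `S` is unit-reflecting over `N`. -/
def UnitReflecting {M : Type*} [CancelCommMonoid M] (N S : Submonoid M) : Prop :=
  ∀ u ∈ S, IsUnitIn S u → ∀ x ∈ N, ∀ y ∈ N, u * y = x → u ∈ N ∧ IsUnitIn N u

/-- `S` is `Ω`-admissible over `N`: `N ≤ S`, `S` is unit-reflecting over `N`, and
every `a ∈ N` whose class in `Associates ↥N` occurs in some `z ∈ Ω` has irreducible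
class in `Associates ↥S`. -/
def OmegaAdmissible {M : Type*} [CancelCommMonoid M] (N S : Submonoid M)
    (Ω : Set (Multiset (Associates N))) : Prop :=
  N ≤ S ∧ UnitReflecting N S ∧
    ∀ (a : M) (haN : a ∈ N) (haS : a ∈ S),
      (∃ z ∈ Ω, Associates.mk (⟨a, haN⟩ : N) ∈ z) →
        Irreducible (Associates.mk (⟨a, haS⟩ : S))

/-- Persistence of a fixed family: if `S` is `Ω`-admissible over `N` for
`Ω ⊆ Z_{N,ℓ}(b)`, then mapping each multiset along the induced map
`ρ : Associates ↥N → Associates ↥S` sends `Ω` injectively into `Z_{S,ℓ}(b)`.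
In particular, if `Ω` is infinite, then `S` is not an FFM. -/
theorem persistence_of_fixed_family {M : Type*} [CancelCommMonoid M]
    (N S : Submonoid M) (hle : N ≤ S) (b : M) (hb : b ∈ N) (ℓ : ℕ)
    (Ω : Set (Multiset (Associates N))) (hΩ : Ω ⊆ ZSetLen N ⟨b, hb⟩ ℓ)
    (hadm : OmegaAdmissible N S Ω) :
    (∀ z ∈ Ω, z.map (associatesMap (Submonoid.inclusion hle)) ∈
        ZSetLen S ⟨b, hle hb⟩ ℓ) ∧
    Set.InjOn (fun z : Multiset (Associates N) =>
        z.map (associatesMap (Submonoid.inclusion hle))) Ω ∧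
    (Ω.Infinite → ¬ IsFFM S) := by
  have hinj : Function.Injective (associatesMap (Submonoid.inclusion hle)) := by
    rintro ⟨x⟩ ⟨y⟩ h
    have h' : Associates.mk (Submonoid.inclusion hle x) =
        Associates.mk (Submonoid.inclusion hle y) := h
    rw [Associates.mk_eq_mk_iff_associated] at h'
    obtain ⟨u, hu⟩ := h'
    have hu' : (x : M) * ((u : S) : M) = (y : M) := congrArg Subtype.val hu
    have huv : ((u : S) : M) * ((↑u⁻¹ : S) : M) = 1 := congrArg Subtype.val u.mul_inv
    obtain ⟨huN, v, hvN, hv⟩ := hadm.2.1 ((u : S) : M) (u : S).2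
      ⟨_, (↑u⁻¹ : S).2, huv⟩ y y.2 x x.2 (by rw [mul_comm]; exact hu')
    refine Associates.mk_eq_mk_iff_associated.2
      ⟨⟨⟨_, huN⟩, ⟨v, hvN⟩, Subtype.ext hv, Subtype.ext ((mul_comm _ _).trans hv)⟩, ?_⟩
    exact Subtype.ext hu'
  have hmap : ∀ z ∈ Ω, z.map (associatesMap (Submonoid.inclusion hle)) ∈
        ZSetLen S ⟨b, hle hb⟩ ℓ := by
    intro z hz
    obtain ⟨⟨_, hprod⟩, hcard⟩ := hΩ hz
    refine ⟨⟨?_, ?_⟩, ?_⟩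
    · intro a ha
      obtain ⟨c, hc, rfl⟩ := Multiset.mem_map.1 ha
      obtain ⟨x, rfl⟩ := Associates.mk_surjective c
      exact hadm.2.2 x x.2 (hle x.2) ⟨z, hz, hc⟩
    · rw [Multiset.prod_hom, hprod]
      rfl
    · rw [Multiset.card_map, hcard]
  have hI : Set.InjOn (fun z : Multiset (Associates N) =>
        z.map (associatesMap (Submonoid.inclusion hle))) Ω :=
    (Multiset.map_injective hinj).injOn
  refine ⟨hmap, hI, fun hinf hF => ?_⟩
  refine hinf (Set.Finite.of_finite_image ((hF ⟨b, hle hb⟩).2.subset ?_) hI)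
  rintro _ ⟨z, hz, rfl⟩
  exact (hmap z hz).1
end

section
/- Let M be a cancellative commutative monoid that is not a group, let b ∈ M, put I = {m ∈ M | ¬ (m ∣ b)}, and let N be a submonoid of M with b ∈ N. Then W = N ∪ I is a submonoid of M; an element w ∈ W is a unit of ↥W if and only if w ∈ N and w is a unit of ↥N; and W is an undermonoid of M. -/
/-- The non-group enlargement: if `M` is not a group, `b ∈ N`, and
`I = {m | ¬ m ∣ b}`, then `W = N ∪ I` is a submonoid of `M`, an element of `W` is a
unit of `↥W` iff it lies in `N` and is a unit of `↥N`, and `W` is an undermonoid. -/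
theorem nonGroup_enlargement (M : Type*) [CancelCommMonoid M]
    (hng : ∃ x : M, ¬ IsUnit x) (b : M) (N : Submonoid M) (hb : b ∈ N) :
    ∃ W : Submonoid M,
      (W : Set M) = (N : Set M) ∪ {m : M | ¬ m ∣ b} ∧
      (∀ w ∈ W, (IsUnitIn W w ↔ w ∈ N ∧ IsUnitIn N w)) ∧
      IsUndermonoid W := by
  have hI : ∀ a c : M, ¬ a ∣ b → ¬ a * c ∣ b := fun a c h h' =>
    h ((Dvd.intro c rfl).trans h')
  have hu : ∀ w v : M, w * v = 1 → w ∣ b := fun w v h =>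
    ⟨v * b, by rw [← mul_assoc, h, one_mul]⟩
  refine ⟨{ carrier := (N : Set M) ∪ {m : M | ¬ m ∣ b}
            one_mem' := Or.inl N.one_mem
            mul_mem' := ?_ }, rfl, ?_, ?_⟩
  · rintro x y (hx | hx) hy
    · rcases hy with hy | hy
      · exact Or.inl (N.mul_mem hx hy)
      · refine Or.inr ?_
        rw [mul_comm]
        exact hI y x hy
    · exact Or.inr (hI x y hx)
  · rintro w hw
    constructor
    · rintro ⟨v, hv, h⟩
      have h1 : w ∈ N := hw.resolve_right (fun k => k (hu w v h))
      have h2 : v ∈ N := by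
        rcases hv with hv | hv
        · exact hv
        · exact absurd (hu v w (by rw [mul_comm, h])) hv
      exact ⟨h1, v, h2, h⟩
    · rintro ⟨_, v, hv, h⟩
      exact ⟨v, Or.inl hv, h⟩
  · obtain ⟨x, hx⟩ := hng
    have hbx : ¬ b * x ∣ b := by
      rintro ⟨c, hc⟩
      apply hx
      refine IsUnit.of_mul_eq_one c ?_
      apply mul_left_cancel (a := b)
      rw [← mul_assoc, ← hc, mul_one]
    intro m
    refine ⟨b * x, Or.inr hbx, m * (b * x), Or.inr ?_, rfl⟩
    rw [mul_comm]
    exact hI _ _ hbx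
end

section
/- Let M be a cancellative commutative monoid that is not a group, let N be a submonoid of M, let b ∈ N, ℓ ∈ ℕ, and Ω ⊆ Z_{N,ℓ}(b). Let W = N ∪ {m ∈ M | ¬ (m ∣ b)}. Then W is Ω-admissible over N: W is unit-reflecting over N, and for every a ∈ N whose class in Associates ↥N occurs in some multiset z ∈ Ω, the class of a in Associates ↥W is irreducible. -/
theorem assoc_irr_mk {A : Type*} [CommMonoid A] {a : A} :
    Irreducible (Associates.mk a) ↔ Irreducible a := by
  constructor
  · intro h
    refine ⟨fun hu => h.not_isUnit (Associates.isUnit_mk.2 hu), fun x y hxy => ?_⟩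
    have := h.isUnit_or_isUnit (a := Associates.mk x) (b := Associates.mk y)
      (by rw [Associates.mk_mul_mk, hxy])
    simpa only [Associates.isUnit_mk] using this
  · intro h
    refine ⟨fun hu => h.not_isUnit (Associates.isUnit_mk.1 hu), fun x y hxy => ?_⟩
    obtain ⟨x, rfl⟩ := Associates.mk_surjective x
    obtain ⟨y, rfl⟩ := Associates.mk_surjective y
    rw [Associates.mk_mul_mk, Associates.mk_eq_mk_iff_associated] at hxy
    obtain ⟨u, hu⟩ := hxy.symm
    have := h.isUnit_or_isUnit (a := x) (b := y * u) (by rw [← hu, mul_assoc])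
    simpa only [Associates.isUnit_mk, Units.isUnit_mul_units] using this

/-- Preservation of fixed atoms in the non-group case: for `M` not a group,
`b ∈ N`, and `Ω ⊆ Z_{N,ℓ}(b)`, the enlargement `W` with underlying set
`N ∪ {m | ¬ m ∣ b}` is `Ω`-admissible over `N`. -/
theorem nonGroup_omegaAdmissible (M : Type*) [CancelCommMonoid M]
    (hng : ∃ x : M, ¬ IsUnit x) (N : Submonoid M) (b : M) (hb : b ∈ N) (ℓ : ℕ)
    (Ω : Set (Multiset (Associates N))) (hΩ : Ω ⊆ ZSetLen N ⟨b, hb⟩ ℓ)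
    (W : Submonoid M) (hW : (W : Set M) = (N : Set M) ∪ {m : M | ¬ m ∣ b}) :
    OmegaAdmissible N W Ω := by
  have key : ∀ m ∈ W, m ∣ b → m ∈ N := by
    intro m hm hd
    have h : m ∈ (W : Set M) := hm
    rw [hW] at h
    rcases h with h | h
    · exact h
    · exact absurd hd h
  have hNW : N ≤ W := by
    intro m hm
    have h : m ∈ (W : Set M) := by
      rw [hW]
      exact Or.inl hm
    exact h
  have hu : ∀ u v : M, u * v = 1 → u ∣ b := fun u v h =>
    ⟨v * b, by rw [← mul_assoc, h, one_mul]⟩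
  refine ⟨hNW, ?_, ?_⟩
  · rintro u huW ⟨v, hv, huv⟩ x - y - -
    exact ⟨key u huW (hu u v huv), v, key v hv (hu v u (by rw [mul_comm, huv])), huv⟩
  · rintro a haN haS ⟨z, hz, haz⟩
    obtain ⟨⟨hirr, hprod⟩, -⟩ := hΩ hz
    have hai := assoc_irr_mk.1 (hirr _ haz)
    have hd := Multiset.dvd_prod haz
    rw [hprod, Associates.mk_dvd_mk] at hd
    obtain ⟨⟨c, hc⟩, hbc⟩ := hd
    have hbc' : b = a * c := congrArg Subtype.val hbc
    have hab : a ∣ b := ⟨c, hbc'⟩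
    rw [assoc_irr_mk]
    refine ⟨?_, ?_⟩
    · intro h
      obtain ⟨⟨v, hv⟩, hav⟩ := isUnit_iff_exists_inv.1 h
      have hav' : a * v = 1 := congrArg Subtype.val hav
      apply hai.not_isUnit
      exact isUnit_iff_exists_inv.2
        ⟨⟨v, key v hv (hu v a (by rw [mul_comm, hav']))⟩, Subtype.ext hav'⟩
    · rintro ⟨x, hx⟩ ⟨y, hy⟩ hxy
      have hxy' : a = x * y := congrArg Subtype.val hxy
      have hxN := key x hx (Dvd.dvd.trans ⟨y, hxy'⟩ hab)
      have hyN := key y hy (Dvd.dvd.trans ⟨x, by rw [hxy', mul_comm]⟩ hab)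
      have := hai.isUnit_or_isUnit (a := ⟨x, hxN⟩) (b := ⟨y, hyN⟩) (Subtype.ext hxy')
      exact this.imp (fun h => h.map (Submonoid.inclusion hNW))
        (fun h => h.map (Submonoid.inclusion hNW))
end

section
/- Let M be a cancellative commutative monoid that is not a group. Suppose N is a submonoid of M for which there exist b ∈ N and ℓ ∈ ℕ such that Z_{N,ℓ}(b) is infinite. Then M has an undermonoid W containing N such that Z_W(b) is infinite; in particular W is not an FFM. -/
/-- The map on associates induced by an inclusion of submonoids. -/
noncomputable def assocIncl {M : Type*} [CancelCommMonoid M] (N W : Submonoid M) (h : N ≤ W) :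
    Associates N →* Associates W where
  toFun := Quotient.map (Submonoid.inclusion h) (fun _ _ hab => hab.map (Submonoid.inclusion h))
  map_one' := by
    change Associates.mk (Submonoid.inclusion h 1) = 1
    rw [map_one]; rfl
  map_mul' := by
    intro x y
    induction x using Quotient.inductionOn with | _ x
    induction y using Quotient.inductionOn with | _ y
    change Associates.mk (Submonoid.inclusion h (x * y)) = _
    rw [map_mul]; rfl

theorem assocIncl_mk {M : Type*} [CancelCommMonoid M] (N W : Submonoid M) (h : N ≤ W) (x : N) :
    assocIncl N W h (Associates.mk x) = Associates.mk (Submonoid.inclusion h x) := rfl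

theorem incl_isUnit {M : Type*} [CancelCommMonoid M] (N W : Submonoid M) (b : M)
    (hP : ∀ x ∈ W, x ∣ b → x ∈ N) (u : W) (hu : IsUnit u) :
    ∃ hN : (u : M) ∈ N, IsUnit (⟨u, hN⟩ : N) := by
  obtain ⟨v, hv⟩ := hu.exists_right_inv
  have hv' : (u : M) * v = 1 := congrArg Subtype.val hv
  have h1 : (u : M) ∈ N := hP _ u.2 ⟨v * b, by rw [← mul_assoc, hv', one_mul]⟩
  have h2 : (v : M) ∈ N := hP _ v.2 ⟨u * b, by rw [← mul_assoc, mul_comm (v : M), hv', one_mul]⟩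
  exact ⟨h1, IsUnit.of_mul_eq_one ⟨v, h2⟩ (Subtype.ext hv')⟩

theorem assocIncl_inj {M : Type*} [CancelCommMonoid M] (N W : Submonoid M) (h : N ≤ W) (b : M)
    (hP : ∀ x ∈ W, x ∣ b → x ∈ N) : Function.Injective (assocIncl N W h) := by
  intro x y hxy
  obtain ⟨x, rfl⟩ := Associates.mk_surjective x
  obtain ⟨y, rfl⟩ := Associates.mk_surjective y
  rw [assocIncl_mk, assocIncl_mk, Associates.mk_eq_mk_iff_associated] at hxy
  obtain ⟨u, hu⟩ := hxy
  obtain ⟨hN, hun⟩ := incl_isUnit N W b hP u u.isUnit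
  rw [Associates.mk_eq_mk_iff_associated]
  refine ⟨hun.unit, Subtype.ext ?_⟩
  have hu' : (x : M) * (u : W) = y := congrArg Subtype.val hu
  exact hu'

theorem assocIncl_irr {M : Type*} [CancelCommMonoid M] (N W : Submonoid M) (h : N ≤ W) (b : M)
    (hb : b ∈ N) (hP : ∀ x ∈ W, x ∣ b → x ∈ N) (a : Associates N) (ha : Irreducible a)
    (hab : a ∣ Associates.mk (⟨b, hb⟩ : N)) : Irreducible (assocIncl N W h a) := by
  obtain ⟨a, rfl⟩ := Associates.mk_surjective a
  rw [Associates.mk_dvd_mk] at hab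
  obtain ⟨c, hc⟩ := hab
  have hc' : b = (a : M) * c := congrArg Subtype.val hc
  rw [irreducible_iff]
  constructor
  · intro hu
    rw [assocIncl_mk, Associates.isUnit_mk] at hu
    obtain ⟨_, hun⟩ := incl_isUnit N W b hP _ hu
    exact ha.not_isUnit (Associates.isUnit_mk.2 hun)
  · intro x y hxy
    obtain ⟨x, rfl⟩ := Associates.mk_surjective x
    obtain ⟨y, rfl⟩ := Associates.mk_surjective y
    have hxy0 := hxy
    rw [assocIncl_mk, Associates.mk_mul_mk, eq_comm, Associates.mk_eq_mk_iff_associated] at hxy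
    obtain ⟨u, hu⟩ := hxy
    have hu' : (x : M) * y * (u : W) = a := congrArg Subtype.val hu
    have hx : (x : M) ∈ N := hP _ x.2 ⟨y * (u : W) * c, by rw [hc', ← hu']; simp only [mul_assoc]⟩
    have hy : (y : M) ∈ N := hP _ y.2 ⟨x * (u : W) * c, by
      rw [hc', ← hu', mul_comm (x : M)]; simp only [mul_assoc]⟩
    have key : Associates.mk a = Associates.mk (⟨x, hx⟩ : N) * Associates.mk (⟨y, hy⟩ : N) := by
      apply assocIncl_inj N W h b hP
      rw [hxy0, map_mul]; rfl
    have := ha.isUnit_or_isUnit key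
    exact this.imp (fun t => t.map (assocIncl N W h)) (fun t => t.map (assocIncl N W h))

theorem ZSet_inf {M : Type*} [CancelCommMonoid M] (N W : Submonoid M) (h : N ≤ W) (b : M)
    (hb : b ∈ N) (hP : ∀ x ∈ W, x ∣ b → x ∈ N) (hinf : (ZSet N ⟨b, hb⟩).Infinite) :
    (ZSet W ⟨b, h hb⟩).Infinite := by
  refine Set.infinite_of_injOn_mapsTo
    (f := Multiset.map (assocIncl N W h))
    (Multiset.map_injective (assocIncl_inj N W h b hP)).injOn ?_ hinf
  rintro z ⟨hz, hp⟩
  refine ⟨?_, ?_⟩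
  · intro a ha
    obtain ⟨c, hc, rfl⟩ := Multiset.mem_map.1 ha
    exact assocIncl_irr N W h b hb hP c (hz c hc) (hp ▸ Multiset.dvd_prod hc)
  · rw [Multiset.prod_hom, hp]; rfl

/-- Bad submonoids produce bad undermonoids, non-group case: if `M` is not a group
and a submonoid `N` has an element `b` with infinitely many length-`ℓ`
factorizations, then `M` has an undermonoid `W ⊇ N` in which `b` has infinitely
many factorizations; in particular `W` is not an FFM. -/
theorem nonGroup_bad_undermonoid (M : Type*) [CancelCommMonoid M]
    (hng : ∃ x : M, ¬ IsUnit x) (N : Submonoid M) (b : M) (hb : b ∈ N) (ℓ : ℕ)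
    (hinf : (ZSetLen N ⟨b, hb⟩ ℓ).Infinite) :
    ∃ W : Submonoid M, N ≤ W ∧ IsUndermonoid W ∧
      ∃ hbW : b ∈ W, (ZSet W ⟨b, hbW⟩).Infinite ∧ ¬ IsFFM W := by
  obtain ⟨x, hx⟩ := hng
  let W : Submonoid M :=
    { carrier := {m | m ∈ N ∨ b * x ∣ m}
      one_mem' := Or.inl N.one_mem
      mul_mem' := by
        rintro p q (hp | hp) (hq | hq)
        · exact Or.inl (N.mul_mem hp hq)
        · exact Or.inr (hq.mul_left p)
        · exact Or.inr (hp.mul_right q)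
        · exact Or.inr (hp.mul_right q) }
  have h : N ≤ W := fun m hm => Or.inl hm
  have hP : ∀ m ∈ W, m ∣ b → m ∈ N := by
    rintro m (hm | hm) hmb
    · exact hm
    · exfalso
      obtain ⟨c, hc⟩ := hm.trans hmb
      apply hx
      refine IsUnit.of_mul_eq_one c (mul_left_cancel (a := b) ?_)
      rw [← mul_assoc, ← hc, mul_one]
  have hI : (ZSet W ⟨b, h hb⟩).Infinite :=
    ZSet_inf N W h b hb hP (hinf.mono fun z hz => hz.1)
  exact ⟨W, h, fun m => ⟨b * x, Or.inr dvd_rfl, m * (b * x), Or.inr (dvd_mul_left _ _), rfl⟩,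
    h hb, hI, fun hF => hI (hF _).2⟩
end

section
/- Let M be a cancellative commutative monoid, N a submonoid, b ∈ N, and ℓ ∈ ℕ such that Z_{N,ℓ}(b) is infinite (a fixed-slice FFM obstruction). Then there exists an undermonoid W of M containing N such that Z_{W,ℓ}(b) is infinite (an undermonoid fixed-slice obstruction with the same b and ℓ). -/
lemma irreducible_mk_iff_aux {A : Type*} [CommMonoid A] (x : A) :
    Irreducible (Associates.mk x) ↔ Irreducible x := by
  constructor
  · intro h
    refine ⟨fun hx => h.not_isUnit (Associates.isUnit_mk.2 hx), fun u v huv => ?_⟩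
    have := h.isUnit_or_isUnit (a := Associates.mk u) (b := Associates.mk v)
      (by rw [Associates.mk_mul_mk, huv])
    simpa only [Associates.isUnit_mk] using this
  · intro h
    refine ⟨fun hx => h.not_isUnit (Associates.isUnit_mk.1 hx), fun u v huv => ?_⟩
    obtain ⟨u, rfl⟩ := Associates.mk_surjective u
    obtain ⟨v, rfl⟩ := Associates.mk_surjective v
    rw [Associates.mk_mul_mk, Associates.mk_eq_mk_iff_associated] at huv
    obtain ⟨e, he⟩ := huv.symm
    have := h.isUnit_or_isUnit (a := u) (b := v * e) (by rw [← he, mul_assoc])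
    simpa only [Associates.isUnit_mk, Units.isUnit_mul_units] using this

def GoodExt {M : Type*} [CancelCommMonoid M] (N : Submonoid M) (b : M) (W : Submonoid M) : Prop :=
  N ≤ W ∧ ∀ u ∈ W, ∀ v ∈ W, u * v = b → u ∈ N ∧ v ∈ N

lemma exists_max_goodExt {M : Type*} [CancelCommMonoid M] (N : Submonoid M) (b : M) :
    ∃ W, GoodExt N b W ∧ ∀ W', GoodExt N b W' → W ≤ W' → W' ≤ W := by
  obtain ⟨W, -, hW⟩ := zorn_le_nonempty₀ {W | GoodExt N b W} (by
    intro c hc hch y hy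
    have hdir : DirectedOn (· ≤ ·) c := hch.directedOn
    refine ⟨sSup c, ⟨(hc hy).1.trans (le_sSup hy), ?_⟩, fun z hz => le_sSup hz⟩
    intro u hu v hv huv
    rw [Submonoid.mem_sSup_of_directedOn ⟨y, hy⟩ hdir] at hu hv
    obtain ⟨s, hs, hus⟩ := hu
    obtain ⟨t, ht, hvt⟩ := hv
    obtain ⟨r, hr, hsr, htr⟩ := hdir s hs t ht
    exact (hc hr).2 u (hsr hus) v (htr hvt) huv) N
    ⟨le_rfl, fun u hu v hv _ => ⟨hu, hv⟩⟩
  exact ⟨W, hW.prop, fun W' h h' => hW.le_of_ge h h'⟩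

lemma goodExt_adjoin {M : Type*} [CancelCommMonoid M] (N : Submonoid M) (b : M)
    (W : Submonoid M) (hW : GoodExt N b W)
    (hmax : ∀ W', GoodExt N b W' → W ≤ W' → W' ≤ W) (m : M)
    (hm : ∀ w ∈ W, ∀ j : ℕ, w * m ^ j = b → j = 0) : m ∈ W := by
  refine hmax (W ⊔ Submonoid.powers m) ⟨hW.1.trans le_sup_left, ?_⟩ le_sup_left
    (Submonoid.mem_sup_right (Submonoid.mem_powers m))
  intro u hu v hv huv
  obtain ⟨w, hw, p, ⟨i, rfl⟩, rfl⟩ := Submonoid.mem_sup.1 hu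
  obtain ⟨w', hw', p', ⟨j, rfl⟩, rfl⟩ := Submonoid.mem_sup.1 hv
  have h0 := hm (w * w') (W.mul_mem hw hw') (i + j) (by
    rw [← huv, pow_add]; exact mul_mul_mul_comm _ _ _ _)
  obtain ⟨rfl, rfl⟩ : i = 0 ∧ j = 0 := by omega
  simp only [pow_zero, mul_one] at huv ⊢
  exact hW.2 w hw w' hw' huv

lemma undermonoid_of_max {M : Type*} [CancelCommMonoid M] (N : Submonoid M) (b : M) (hb : b ∈ N)
    (hnu : ∀ x ∈ N, b * x ≠ 1) (W : Submonoid M) (hW : GoodExt N b W)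
    (hmax : ∀ W', GoodExt N b W' → W ≤ W' → W' ≤ W) : IsUndermonoid W := by
  have hbW : b ∈ W := hW.1 hb
  have hnuW : ∀ x ∈ W, b * x ≠ 1 := by
    intro x hx h
    refine hnu x (hW.2 (b * b) (W.mul_mem hbW hbW) x hx ?_).2 h
    rw [mul_assoc, h, mul_one]
  intro m
  by_cases hfree : ∃ k : ℕ, k ≠ 0 ∧ ∃ c ∈ W, m ^ k * c ∈ W
  · obtain ⟨k, hk, c, hc, hd⟩ := hfree
    have hx : c * b ^ 2 ∈ W := W.mul_mem hc (W.pow_mem hbW 2)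
    refine ⟨c * b ^ 2, hx, _, goodExt_adjoin N b W hW hmax (m * (c * b ^ 2)) ?_, rfl⟩
    intro w hw j hj
    by_contra hj0
    obtain ⟨k, rfl⟩ := Nat.exists_eq_succ_of_ne_zero hk
    obtain ⟨j, rfl⟩ := Nat.exists_eq_succ_of_ne_zero hj0
    obtain ⟨e, he⟩ : ∃ e, e = m ^ (k+1) * c * c ^ k := ⟨_, rfl⟩
    have heW : e ∈ W := he ▸ W.mul_mem hd (W.pow_mem hc k)
    have h1 : (m * (c * b ^ 2)) ^ (k+1) = e * b ^ (2 * (k+1)) := by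
      rw [he, mul_pow, mul_pow, ← pow_mul, pow_succ c k, mul_comm (c ^ k) c]
      simp only [mul_assoc]
    have h2 : w ^ (k+1) * (e * b ^ (2 * (k+1))) ^ (j+1) = b ^ (k+1) := by
      have h := congrArg (fun t => t ^ (k+1)) hj
      simp only [mul_pow w] at h
      rw [← h1, ← h, ← pow_mul, ← pow_mul, mul_comm (k+1)]
    have h3 : b ^ (k+1) * (b * (b ^ (k + 2*(k+1)*j) * (w ^ (k+1) * e ^ (j+1))))
        = b ^ (k+1) * 1 := by
      rw [mul_one]
      conv_rhs => rw [← h2]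
      rw [mul_pow, ← pow_mul, ← mul_assoc b, ← pow_succ', ← mul_assoc (b ^ (k+1)), ← pow_add,
        mul_comm, mul_assoc]
      have hexp : k + 1 + (k + 2 * (k + 1) * j + 1) = 2 * (k + 1) * (j + 1) := by ring
      rw [hexp]
    exact hnuW _ (W.mul_mem (W.pow_mem hbW _) (W.mul_mem (W.pow_mem hw _) (W.pow_mem heW _)))
      (mul_left_cancel h3)
  · refine ⟨1, W.one_mem, m, goodExt_adjoin N b W hW hmax m ?_, mul_one m⟩
    intro w hw j hj
    by_contra hj0
    exact hfree ⟨j, hj0, w, hw, by rw [mul_comm, hj]; exact hbW⟩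

/-- Local obstruction theorem: a fixed-slice FFM obstruction `(N, b, ℓ)` in `M`
produces an undermonoid fixed-slice obstruction `(W, b, ℓ)` with the same `b`
and `ℓ`. -/
theorem local_obstruction (M : Type*) [CancelCommMonoid M] (N : Submonoid M)
    (b : M) (hb : b ∈ N) (ℓ : ℕ) (hinf : (ZSetLen N ⟨b, hb⟩ ℓ).Infinite) :
    ∃ W : Submonoid M, N ≤ W ∧ IsUndermonoid W ∧
      ∃ hbW : b ∈ W, (ZSetLen W ⟨b, hbW⟩ ℓ).Infinite := by
  have hnu : ∀ x ∈ N, b * x ≠ 1 := by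
    intro x hx h
    apply hinf
    refine (Set.finite_singleton (0 : Multiset (Associates N))).subset ?_
    rintro z ⟨⟨hz, hp⟩, -⟩
    have hu : IsUnit (⟨b, hb⟩ : N) := IsUnit.of_mul_eq_one ⟨x, hx⟩ (Subtype.ext h)
    refine Multiset.eq_zero_of_forall_notMem fun a ha => (hz a ha).not_isUnit ?_
    refine isUnit_of_dvd_unit (Multiset.dvd_prod ha) ?_
    rw [hp]
    exact Associates.isUnit_mk.2 hu
  obtain ⟨W, hW, hmax⟩ := exists_max_goodExt N b
  have hbW : b ∈ W := hW.1 hb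
  refine ⟨W, hW.1, undermonoid_of_max N b hb hnu W hW hmax, hbW, ?_⟩
  let i : N →* W := Submonoid.inclusion hW.1
  have hdiv : ∀ u v : W, (u : M) * v = b → (u : M) ∈ N := fun u v h => (hW.2 u u.2 v v.2 h).1
  have hunit : ∀ u v : W, u * v = 1 → (u : M) ∈ N := by
    intro u v h
    apply hdiv u (v * ⟨b, hbW⟩)
    have h' : (u : M) * v = 1 := congrArg Subtype.val h
    rw [Submonoid.coe_mul, ← mul_assoc, h', one_mul]
  have hunit' : ∀ x : N, IsUnit (i x) → IsUnit x := by
    intro x hx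
    obtain ⟨y, hy⟩ := hx.exists_right_inv
    refine IsUnit.of_mul_eq_one ⟨y, hunit y (i x) (by rw [mul_comm, hy])⟩ (Subtype.ext ?_)
    have := congrArg (Subtype.val : W → M) hy
    exact this
  let f : Associates N →* Associates W :=
    { toFun := Quotient.map i (fun x y h => h.map i)
      map_one' := by
        change Associates.mk (i 1) = 1
        rw [map_one]; rfl
      map_mul' := by
        intro x y
        induction x using Quotient.inductionOn
        induction y using Quotient.inductionOn
        rename_i x y
        change Associates.mk (i (x * y)) = Associates.mk (i x) * Associates.mk (i y)
        rw [map_mul, Associates.mk_mul_mk] }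
  have hf : ∀ x, f (Associates.mk x) = Associates.mk (i x) := fun x => rfl
  have hfinj : Function.Injective f := by
    intro x y h
    obtain ⟨x, rfl⟩ := Associates.mk_surjective x
    obtain ⟨y, rfl⟩ := Associates.mk_surjective y
    rw [hf, hf, Associates.mk_eq_mk_iff_associated] at h
    obtain ⟨u, hu⟩ := h
    have hu1 := hunit u.1 u.2 u.3
    have hU : IsUnit (⟨(u : W), hu1⟩ : N) := hunit' _ (by exact u.isUnit)
    rw [Associates.mk_eq_mk_iff_associated]
    refine ⟨hU.unit, Subtype.ext ?_⟩
    have := congrArg (Subtype.val : W → M) hu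
    exact this
  refine (hinf.image ((Multiset.map_injective hfinj).injOn)).mono ?_
  rintro _ ⟨z, ⟨⟨hz, hp⟩, hc⟩, rfl⟩
  refine ⟨⟨?_, ?_⟩, by simpa using hc⟩
  · intro a' ha'
    obtain ⟨a, ha, rfl⟩ := Multiset.mem_map.1 ha'
    have hirr := hz a ha
    have hdvd := Multiset.dvd_prod ha
    rw [hp] at hdvd
    obtain ⟨x, rfl⟩ := Associates.mk_surjective a
    rw [Associates.mk_dvd_mk] at hdvd
    obtain ⟨c, hc⟩ := hdvd
    have hc' : b = (x : M) * c := congrArg Subtype.val hc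
    rw [hf, irreducible_mk_iff_aux]
    rw [irreducible_mk_iff_aux] at hirr
    refine ⟨fun h => hirr.not_isUnit (hunit' x h), ?_⟩
    intro u v huv
    have huv' : (x : M) = u * v := congrArg Subtype.val huv
    have hu : (u : M) ∈ N := hdiv u (v * i c) (by
      change (u : M) * (v * c) = b
      rw [hc', huv', mul_assoc])
    have hv : (v : M) ∈ N := hdiv v (u * i c) (by
      change (v : M) * (u * c) = b
      rw [hc', huv', ← mul_assoc, mul_comm (v : M)])
    have := hirr.isUnit_or_isUnit (a := ⟨u, hu⟩) (b := ⟨v, hv⟩) (Subtype.ext huv')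
    exact this.imp (fun h => h.map i) (fun h => h.map i)
  · rw [← map_multiset_prod, hp]
    rfl
end

section
/- Let M be a cancellative commutative monoid. Then every submonoid of M is an LFFM if and only if every undermonoid of M is an LFFM. -/
/-- `S` is atomic: every element has a factorization. -/
def Atomic {M : Type*} [CancelCommMonoid M] (S : Submonoid M) : Prop :=
  ∀ b : S, (ZSet S b).Nonempty

/-- `S` is an LFFM: atomic, with all fixed-length factorization fibers finite. -/
def IsLFFM {M : Type*} [CancelCommMonoid M] (S : Submonoid M) : Prop :=
  Atomic S ∧ ∀ (b : S) (ℓ : ℕ), (ZSetLen S b ℓ).Finite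

/-- Nonunit proper divisors. -/
def PDiv {A : Type*} [CommMonoid A] (b : A) : Set A :=
  {x | ¬ IsUnit x ∧ ∃ y, ¬ IsUnit y ∧ x * y = b}

theorem irr_mk {A : Type*} [CommMonoid A] {b : A} :
    Irreducible (Associates.mk b) ↔ Irreducible b := by
  constructor
  · intro h
    refine irreducible_iff.2 ⟨fun hu => h.not_isUnit (Associates.isUnit_mk.2 hu), ?_⟩
    rintro x y rfl
    have := h.isUnit_or_isUnit (Associates.mk_mul_mk (x := x) (y := y)).symm
    simpa only [Associates.isUnit_mk] using this
  · intro h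
    refine irreducible_iff.2 ⟨fun hu => h.not_isUnit (Associates.isUnit_mk.1 hu), ?_⟩
    intro x y hxy
    obtain ⟨x, rfl⟩ := Associates.mk_surjective x
    obtain ⟨y, rfl⟩ := Associates.mk_surjective y
    rw [Associates.mk_mul_mk, Associates.mk_eq_mk_iff_associated] at hxy
    have := (hxy.irreducible h).isUnit_or_isUnit rfl
    simpa only [Associates.isUnit_mk] using this

theorem atomic_aux {M : Type*} [CancelCommMonoid M] (S : Submonoid M)
    (h : ∀ b : S, (PDiv b).Finite) : Atomic S := by
  suffices H : ∀ n : ℕ, ∀ b : S, (PDiv b).ncard = n → (ZSet S b).Nonempty from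
    fun b => H _ b rfl
  intro n
  induction n using Nat.strong_induction_on with
  | _ n ih =>
    intro b hb
    have hlt : ∀ x y : S, ¬ IsUnit x → ¬ IsUnit y → x * y = b → (ZSet S x).Nonempty := by
      intro x y hx hy hxy
      refine ih _ ?_ x rfl
      rw [← hb]
      refine Set.ncard_lt_ncard ?_ (h b)
      refine (Set.ssubset_iff_of_subset ?_).2 ⟨x, ⟨hx, y, hy, hxy⟩, ?_⟩
      · rintro z ⟨hz, w, hw, hzw⟩
        refine ⟨hz, w * y, fun hu => hw (isUnit_of_mul_isUnit_left hu), ?_⟩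
        rw [← mul_assoc, hzw, hxy]
      · rintro ⟨_, w, hw, hxw⟩
        apply hw
        have : w = 1 := by simpa using hxw
        rw [this]; exact isUnit_one
    by_cases hu : IsUnit b
    · refine ⟨0, by simp, ?_⟩
      rw [Multiset.prod_zero, eq_comm, Associates.mk_eq_one]
      exact hu
    by_cases hi : Irreducible b
    · refine ⟨{Associates.mk b}, ?_, by simp⟩
      intro a ha
      rw [Multiset.mem_singleton] at ha
      rw [ha, irr_mk]
      exact hi
    · rw [irreducible_iff] at hi
      push Not at hi
      obtain ⟨x, y, hxy, hx, hy⟩ := hi hu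
      obtain ⟨z, hz, hz'⟩ := hlt x y hx hy hxy.symm
      obtain ⟨w, hw, hw'⟩ := hlt y x hy hx (by rw [mul_comm, hxy])
      refine ⟨z + w, ?_, ?_⟩
      · intro a ha
        rcases Multiset.mem_add.1 ha with ha | ha
        · exact hz a ha
        · exact hw a ha
      · rw [Multiset.prod_add, hz', hw', Associates.mk_mul_mk, hxy]

theorem finite_aux {M : Type*} [CancelCommMonoid M] (S : Submonoid M)
    (h : ∀ b : S, (PDiv b).Finite) (b : S) (l : ℕ) : (ZSetLen S b l).Finite := by
  classical
  have hA : ((Associates.mk '' PDiv b) ∪ {Associates.mk b}).Finite :=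
    ((h b).image _).union (Set.finite_singleton _)
  refine Set.Finite.subset
    (((hA.toFinset.sym l).image (fun s : Sym (Associates S) l => (s : Multiset (Associates S)))).finite_toSet) ?_
  rintro z ⟨⟨hz, hzb⟩, hl⟩
  rw [Finset.mem_coe, Finset.mem_image]
  refine ⟨Sym.mk z hl, ?_, rfl⟩
  refine Finset.mem_sym_iff.2 ?_
  intro a ha
  have ha : a ∈ z := ha
  rw [Set.Finite.mem_toFinset]
  have hdvd : a ∣ Associates.mk b := hzb ▸ Multiset.dvd_prod ha
  have hirr := hz a ha
  obtain ⟨x, rfl⟩ := Associates.mk_surjective a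
  rw [Associates.mk_dvd_mk] at hdvd
  obtain ⟨y, hy⟩ := hdvd
  rw [irr_mk] at hirr
  by_cases hu : IsUnit y
  · right
    rw [Set.mem_singleton_iff, Associates.mk_eq_mk_iff_associated]
    obtain ⟨u, rfl⟩ := hu
    exact ⟨u, hy.symm⟩
  · left
    exact ⟨x, ⟨hirr.not_isUnit, y, hu, hy.symm⟩, rfl⟩

/-- The submonoid `{1} ∪ bN`. -/
def oneUnion {M : Type*} [CancelCommMonoid M] (N : Submonoid M) (b : N) : Submonoid M where
  carrier := {m | m = 1 ∨ ∃ n ∈ N, m = b * n}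
  one_mem' := Or.inl rfl
  mul_mem' := by
    rintro x y (rfl | ⟨n, hn, rfl⟩) (rfl | ⟨k, hk, rfl⟩)
    · left; simp
    · right; exact ⟨k, hk, by simp⟩
    · right; exact ⟨n, hn, by simp⟩
    · right; exact ⟨n * (b * k), N.mul_mem hn (N.mul_mem b.2 hk), by rw [mul_assoc]⟩

theorem oneUnion_unit {M : Type*} [CancelCommMonoid M] (N : Submonoid M) (b : N)
    (hb : ¬ IsUnit b) (t : oneUnion N b) (ht : IsUnit t) : t = 1 := by
  obtain ⟨t', ht'⟩ := isUnit_iff_exists_inv.1 ht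
  have h1 : (t : M) * t' = 1 := congrArg Subtype.val ht'
  rcases t.2 with h | ⟨n, hn, h⟩
  · exact Subtype.ext h
  · exfalso
    have h2 : (t' : M) ∈ N := by
      rcases t'.2 with h | ⟨k, hk, h⟩
      · rw [h]; exact N.one_mem
      · rw [h]; exact N.mul_mem b.2 hk
    apply hb
    refine isUnit_iff_exists_inv.2 ⟨⟨n * t', N.mul_mem hn h2⟩, Subtype.ext ?_⟩
    change (b : M) * (n * t') = 1
    rw [← mul_assoc, ← h, h1]

theorem pdiv_finite {M : Type*} [CancelCommMonoid M] (N : Submonoid M) (b : N)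
    (h : IsLFFM (oneUnion N b)) : (PDiv b).Finite := by
  classical
  by_cases hb : IsUnit b
  · refine Set.finite_empty.subset ?_
    rintro x ⟨hx, y, hy, rfl⟩
    exact hx (isUnit_of_mul_isUnit_left hb)
  let f : N → oneUnion N b := fun x => ⟨b * x, Or.inr ⟨x, x.2, rfl⟩⟩
  have hf : Function.Injective f := by
    intro x y hxy
    have : (b : M) * x = b * y := congrArg Subtype.val hxy
    exact Subtype.ext (mul_left_cancel this)
  have hmk : Function.Injective (Associates.mk : oneUnion N b → _) := by
    intro s t hst
    obtain ⟨u, hu⟩ := Associates.mk_eq_mk_iff_associated.1 hst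
    rw [oneUnion_unit N b hb u u.isUnit, mul_one] at hu
    exact hu
  have hirr : ∀ x y : N, ¬ IsUnit x → ¬ IsUnit y → x * y = b → Irreducible (f x) := by
    intro x y hx hy hxy
    refine irreducible_iff.2 ⟨?_, ?_⟩
    · intro hu
      have h1 : (b : M) * x = 1 := congrArg Subtype.val (oneUnion_unit N b hb _ hu)
      exact hb (isUnit_iff_exists_inv.2 ⟨x, Subtype.ext h1⟩)
    · rintro s t hst
      have hst' : (b : M) * x = s * t := congrArg Subtype.val hst
      rcases s.2 with hs | ⟨n, hn, hs⟩
      · left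
        rw [show s = 1 from Subtype.ext hs]; exact isUnit_one
      rcases t.2 with ht | ⟨k, hk, ht⟩
      · right
        rw [show t = 1 from Subtype.ext ht]; exact isUnit_one
      exfalso
      rw [hs, ht, mul_assoc] at hst'
      have hx' : x = ⟨n, hn⟩ * (b * ⟨k, hk⟩) := Subtype.ext (mul_left_cancel hst')
      apply hy
      have h3 : b * (y * (⟨n, hn⟩ * ⟨k, hk⟩)) = b * 1 := by
        rw [mul_one]
        conv_rhs => rw [← hxy, hx']
        simp only [mul_comm, mul_left_comm]
      exact isUnit_iff_exists_inv.2 ⟨_, mul_left_cancel h3⟩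
  let c : oneUnion N b := f (b * b)
  have hU : (⋃ z ∈ ZSetLen (oneUnion N b) c 2, {a | a ∈ z}).Finite :=
    (h.2 c 2).biUnion fun z _ => Multiset.finite_toSet z
  refine Set.Finite.subset (hU.preimage ((hmk.comp hf).injOn)) ?_
  rintro x ⟨hx, y, hy, hxy⟩
  rw [Set.mem_preimage, Set.mem_iUnion₂]
  refine ⟨{Associates.mk (f x), Associates.mk (f y)}, ⟨⟨?_, ?_⟩, rfl⟩, ?_⟩
  · intro a ha
    simp only [Multiset.insert_eq_cons, Multiset.mem_cons, Multiset.mem_singleton] at ha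
    rcases ha with rfl | rfl
    · exact irr_mk.2 (hirr x y hx hy hxy)
    · exact irr_mk.2 (hirr y x hy hx (by rw [mul_comm, hxy]))
  · rw [Multiset.insert_eq_cons, Multiset.prod_cons, Multiset.prod_singleton,
      Associates.mk_mul_mk]
    congr 1
    apply Subtype.ext
    change (b : M) * x * (b * y) = b * (b * b)
    have : (x : M) * y = b := congrArg Subtype.val hxy
    rw [mul_mul_mul_comm, this, mul_assoc]
  · simp

/-- `S` is closed under division inside `N`. -/
def Sat {M : Type*} [CancelCommMonoid M] (S N : Submonoid M) : Prop :=
  ∀ s ∈ S, ∀ t ∈ S, ∀ n ∈ N, s * n = t → n ∈ S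

theorem exists_adj {M : Type*} [CancelCommMonoid M] (N : Submonoid M) (m : M) :
    ∃ b ∈ N, ∀ j : ℕ, ∀ x ∈ N, (m * b) ^ j * x ∈ N → (m * b) ^ j ∈ N := by
  classical
  by_cases H : ∃ k : ℕ, 0 < k ∧ ∃ b ∈ N, m ^ k * b ∈ N
  · obtain ⟨hk, b, hb, hm⟩ := Nat.find_spec H
    have hmin := fun r => @Nat.find_min _ _ H r
    set k := Nat.find H
    have hck : (m * b) ^ k ∈ N := by
      obtain ⟨k', hk'⟩ : ∃ k', k = k' + 1 := ⟨k - 1, by omega⟩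
      rw [mul_pow, hk', pow_succ b, mul_comm (b ^ k'), ← mul_assoc, ← hk']
      exact N.mul_mem hm (N.pow_mem hb _)
    refine ⟨b, hb, ?_⟩
    intro j x hx hj
    have hdm := Nat.div_add_mod j k
    have hq : (m * b) ^ (k * (j / k)) ∈ N := by
      rw [pow_mul]; exact N.pow_mem hck _
    have hr : j % k = 0 := by
      by_contra hr
      refine hmin (j % k) (Nat.mod_lt _ hk) ⟨Nat.pos_of_ne_zero hr,
        b ^ (j % k) * ((m * b) ^ (k * (j / k)) * x),
        N.mul_mem (N.pow_mem hb _) (N.mul_mem hq hx), ?_⟩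
      rw [← mul_assoc, ← mul_pow, ← mul_assoc, ← pow_add, add_comm, hdm]
      exact hj
    rw [hr, add_zero] at hdm
    rw [← hdm]; exact hq
  · refine ⟨1, N.one_mem, ?_⟩
    intro j x hx hj
    rcases Nat.eq_zero_or_pos j with rfl | hj0
    · simp
    · rw [mul_one] at hj
      exact absurd ⟨j, hj0, x, hx, hj⟩ H

theorem exists_sat {M : Type*} [CancelCommMonoid M] (S : Submonoid M) :
    ∃ N : Submonoid M, S ≤ N ∧ Sat S N ∧ IsUndermonoid N := by
  obtain ⟨N, hSN, hmax⟩ := zorn_le_nonempty₀ {N : Submonoid M | Sat S N} (by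
    intro c hc hch y hy
    refine ⟨sSup c, ?_, fun z hz => le_sSup hz⟩
    intro s hs t ht n hn hst
    obtain ⟨K, hK, hnK⟩ := (Submonoid.mem_sSup_of_directedOn ⟨y, hy⟩ hch.directedOn).1 hn
    exact hc hK s hs t ht n hnK hst) S (fun s hs t ht n hn _ => hn)
  refine ⟨N, hSN, hmax.prop, ?_⟩
  intro m
  obtain ⟨b, hb, hj⟩ := exists_adj N m
  refine ⟨b, hb, m * b, ?_, rfl⟩
  have hsat : Sat S (N ⊔ Submonoid.powers (m * b)) := by
    intro s hs t ht n hn hst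
    obtain ⟨y, hy, z, ⟨j, rfl⟩, rfl⟩ := Submonoid.mem_sup.1 hn
    have : (m * b) ^ j ∈ N := by
      refine hj j (s * y) (N.mul_mem (hSN hs) hy) ?_
      have e : (m * b) ^ j * (s * y) = t := by rw [← hst, mul_comm, mul_assoc]
      rw [e]; exact hSN ht
    exact hmax.prop s hs t ht _ (N.mul_mem hy this) hst
  exact hmax.le_of_ge hsat le_sup_left
    ((le_sup_right : _ ≤ N ⊔ Submonoid.powers (m * b)) (Submonoid.mem_powers _))

/-- The LFFM property is detected by undermonoids: every submonoid of `M` is an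
LFFM iff every undermonoid of `M` is an LFFM. -/
theorem lffm_detected_by_undermonoids (M : Type*) [CancelCommMonoid M] :
    (∀ S : Submonoid M, IsLFFM S) ↔ (∀ N : Submonoid M, IsUndermonoid N → IsLFFM N) := by
  refine ⟨fun h N _ => h N, fun h S => ?_⟩
  obtain ⟨N, hSN, hsat, hN⟩ := exists_sat S
  have hD : ∀ b : N, (PDiv b).Finite := by
    intro b
    refine pdiv_finite N b (h _ ?_)
    intro m
    obtain ⟨x, hx, y, hy, hxy⟩ := hN m
    refine ⟨b * x, Or.inr ⟨x, hx, rfl⟩, b * y, Or.inr ⟨y, hy, rfl⟩, ?_⟩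
    rw [← hxy, mul_left_comm]
  have hu : ∀ x : S, ¬ IsUnit x → ¬ IsUnit (Submonoid.inclusion hSN x) := by
    intro x hx hu
    obtain ⟨n, hn⟩ := isUnit_iff_exists_inv.1 hu
    have hn' : (x : M) * n = 1 := congrArg Subtype.val hn
    exact hx (isUnit_iff_exists_inv.2
      ⟨⟨n, hsat x x.2 1 S.one_mem n n.2 hn'⟩, Subtype.ext hn'⟩)
  have hS : ∀ b : S, (PDiv b).Finite := by
    intro b
    refine Set.Finite.subset ((hD (Submonoid.inclusion hSN b)).preimage
      ((Submonoid.inclusion_injective hSN).injOn)) ?_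
    rintro x ⟨hx, y, hy, hxy⟩
    exact ⟨hu x hx, Submonoid.inclusion hSN y, hu y hy, by rw [← map_mul, hxy]⟩
  exact ⟨atomic_aux S hS, finite_aux S hS⟩
end

section
/- Let H = {0} ∪ {q : ℚ | 1 ≤ q} be an additive submonoid of ℚ. Then: (a) an element a ∈ H is an atom of H (i.e., a ≠ 0 and a is not the sum of two nonzero elements of H) if and only if 1 ≤ a < 2; (b) the set of multisets s of rationals such that s.card = 2, every element of s is an atom of H, and s.sum = 3, is infinite. Consequently H is not a finite factorization monoid. -/
/-- The underlying set of the additive monoid `H = {0} ∪ ℚ_{≥1}`. -/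
def HSet : Set ℚ := {0} ∪ {q : ℚ | 1 ≤ q}

/-- `a` is an atom of `H`: a nonzero element of `H` that is not the sum of two
nonzero elements of `H`. -/
def IsAtomH (a : ℚ) : Prop :=
  a ∈ HSet ∧ a ≠ 0 ∧ ¬ ∃ x ∈ HSet, ∃ y ∈ HSet, x ≠ 0 ∧ y ≠ 0 ∧ a = x + y

/-- The set of factorizations of `b` in `H`: multisets of atoms of `H` summing
to `b`. -/
def FactH (b : ℚ) : Set (Multiset ℚ) :=
  {s | (∀ x ∈ s, IsAtomH x) ∧ s.sum = b}

/-- `H` is a finite factorization monoid: every element of `H` has a nonempty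
finite set of factorizations into atoms. -/
def HIsFFM : Prop := ∀ b ∈ HSet, (FactH b).Nonempty ∧ (FactH b).Finite

/-- In `H = {0} ∪ ℚ_{≥1}`: (a) an element `a ∈ H` is an atom iff `1 ≤ a < 2`;
(b) the set of length-two multisets of atoms summing to `3` is infinite.
Consequently `H` is not a finite factorization monoid. -/
theorem H_fixed_length_obstruction :
    (∀ a ∈ HSet, (IsAtomH a ↔ 1 ≤ a ∧ a < 2)) ∧
    {s : Multiset ℚ | Multiset.card s = 2 ∧ (∀ x ∈ s, IsAtomH x) ∧ s.sum = 3}.Infinite ∧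
    ¬ HIsFFM := by
  have hA : ∀ a ∈ HSet, (IsAtomH a ↔ 1 ≤ a ∧ a < 2) := by
    intro a ha
    constructor
    · rintro ⟨_, h0, h⟩
      have h1 : 1 ≤ a := by
        rcases ha with h' | h'
        · exact absurd h' h0
        · exact h'
      refine ⟨h1, ?_⟩
      by_contra h2
      refine h ⟨1, Or.inr (le_refl (1 : ℚ)), a - 1, Or.inr ?_, one_ne_zero, ?_, by ring⟩
      · show (1 : ℚ) ≤ a - 1
        linarith
      · intro h3
        linarith
    · rintro ⟨h1, h2⟩
      refine ⟨ha, by intro h; linarith, ?_⟩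
      rintro ⟨x, hx, y, hy, hx0, hy0, he⟩
      have hx1 : 1 ≤ x := by
        rcases hx with h' | h'
        · exact absurd h' hx0
        · exact h'
      have hy1 : 1 ≤ y := by
        rcases hy with h' | h'
        · exact absurd h' hy0
        · exact h'
      linarith
  have hB : {s : Multiset ℚ | Multiset.card s = 2 ∧ (∀ x ∈ s, IsAtomH x) ∧
      s.sum = 3}.Infinite := by
    refine Set.infinite_of_injOn_mapsTo (s := Set.Ioo (1 : ℚ) (3 / 2))
      (f := fun q => ({q, 3 - q} : Multiset ℚ)) ?_ ?_ (Set.Ioo_infinite (by norm_num))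
    · intro q hq p hp h
      have hm : q ∈ ({p, 3 - p} : Multiset ℚ) := by
        have h' : ({q, 3 - q} : Multiset ℚ) = {p, 3 - p} := h
        rw [← h']
        simp
      simp only [Multiset.insert_eq_cons, Multiset.mem_cons, Multiset.mem_singleton] at hm
      rcases hm with hm | hm
      · exact hm
      · linarith [hq.2, hp.2]
    · intro q hq
      refine ⟨by simp, ?_, by simp⟩
      intro x hx
      simp only [Multiset.insert_eq_cons, Multiset.mem_cons, Multiset.mem_singleton] at hx
      have hx' : 1 ≤ x ∧ x < 2 := by
        rcases hx with hx | hx <;> constructor <;> linarith [hq.1, hq.2]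
      exact (hA x (Or.inr hx'.1)).2 hx'
  refine ⟨hA, hB, fun hF => hB ((hF 3 (Or.inr ?_)).2.subset fun s hs => hs.2)⟩
  show (1 : ℚ) ≤ 3
  norm_num
end
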